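/- Let θ be a subtle cardinal. Then there exists κ < θ such that R(θ) ⊨ 'κ is unfoldable'; that is, there is an inaccessible κ < θ such that for every S ⊆ R(κ) and every γ < θ there is a well-founded model (M,∈,Ŝ) of rank < θ with (R(κ),∈,S) ≺_e (M,∈,Ŝ) and o(M) ≥ γ. -/

import Mathlib

open FirstOrder Cardinal

/-- The language of set theory with one binary relation symbol (membership)
and one unary predicate symbol (for a distinguished subset). -/
def LSP : FirstOrder.Language where
  Functions := fun _ => Empty
  Relations := fun n =>
    match n with
    | 1 => Unit
    | 2 => Unit
    | _ => Empty

/-- A model of the language of set theory: a carrier together with a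
membership relation and the interpretation of the distinguished predicate. -/
structure SetModel : Type 2 where
  Carrier : Type 1
  mem : Carrier → Carrier → Prop
  pred : Carrier → Prop

/-- The first-order `LSP`-structure attached to a `SetModel`. -/
def SetModel.str (M : SetModel) : LSP.Structure M.Carrier where
  funMap := fun {_} f _ => Empty.elim f
  RelMap := fun {n} =>
    match n with
    | 1 => fun _ v => M.pred (v 0)
    | 2 => fun _ v => M.mem (v 0) (v 1)
    | 0 => fun r _ => Empty.elim r
    | (_ + 3) => fun r _ => Empty.elim r

/-- Satisfaction of a first-order formula with `n` free variables in a `SetModel`. -/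
def SetModel.Realize (M : SetModel) {n : ℕ} (φ : LSP.Formula (Fin n))
    (v : Fin n → M.Carrier) : Prop :=
  letI := M.str
  φ.Realize v

/-- `f : M → N` is an elementary map. -/
def IsElem (M N : SetModel) (f : M.Carrier → N.Carrier) : Prop :=
  ∀ (n : ℕ) (φ : LSP.Formula (Fin n)) (v : Fin n → M.Carrier),
    N.Realize φ (f ∘ v) ↔ M.Realize φ v

/-- `f : M → N` realizes `N` as a (proper) end elementary extension of `M`:
it is elementary, no element of `M` gains new members in `N`, and `N` properly
extends the image of `M`. -/
structure IsEEE (M N : SetModel) (f : M.Carrier → N.Carrier) : Prop where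
  elementary : IsElem M N f
  isEnd : ∀ (a : M.Carrier) (b : N.Carrier), N.mem b (f a) → ∃ b', f b' = b
  proper : ¬ Function.Surjective f

/-- `N` is a (proper) end elementary extension of `M`. -/
def EEE (M N : SetModel) : Prop := ∃ f, IsEEE M N f

/-- Isomorphism of set models. -/
def SMIso (M N : SetModel) : Prop :=
  ∃ e : M.Carrier ≃ N.Carrier,
    (∀ x y, M.mem x y ↔ N.mem (e x) (e y)) ∧ ∀ x, M.pred x ↔ N.pred (e x)

/-- The model `(A, ∈, S)` where `A, S` are collections of ZFC sets and `∈` is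
genuine membership. -/
def ZModel (A S : Set ZFSet) : SetModel :=
  ⟨A, fun x y => (x : ZFSet) ∈ (y : ZFSet), fun x => (x : ZFSet) ∈ S⟩

/-- `(A,∈,SA) ≺ₑ (B,∈,SB)`: the inclusion map is a proper end elementary
extension of concrete (well-founded) models. -/
def ZEEE (A SA B SB : Set ZFSet) : Prop :=
  ∃ h : A ⊆ B, IsEEE (ZModel A SA) (ZModel B SB) (Set.inclusion h)

/-- `R(o) = V_o`: the collection of ZFC sets of rank `< o`. -/
def Vrank (o : Ordinal.{0}) : Set ZFSet := {x | x.rank < o}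

/-- `C` is club (closed and unbounded) in `θ`. -/
def IsClubIn (C : Set Ordinal.{0}) (θ : Ordinal.{0}) : Prop :=
  C ⊆ Set.Iio θ ∧ (∀ α < θ, ∃ β ∈ C, α ≤ β) ∧
    ∀ α, 0 < α → α < θ → (∀ β < α, ∃ γ ∈ C, β < γ ∧ γ < α) → α ∈ C

/-- `θ` is subtle: inaccessible, and for every sequence `(S_α)_{α<θ}` with
`S_α ⊆ α` and every club `C ⊆ θ` there are `β < γ` in `C` with `S_β = S_γ ∩ β`. -/
def IsSubtle (θ : Cardinal.{0}) : Prop :=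
  θ.IsInaccessible ∧
    ∀ S : Ordinal.{0} → Set Ordinal.{0}, (∀ α, S α ⊆ Set.Iio α) →
      ∀ C : Set Ordinal.{0}, IsClubIn C θ.ord →
        ∃ β ∈ C, ∃ γ ∈ C, β < γ ∧ S β = S γ ∩ Set.Iio β

/-!
If no `κ < θ` works, each inaccessible `κ < θ` has a counterexample: a predicate `S_κ` and a bound
`γ_κ < θ`. Since `θ` is inaccessible, the part below rank `θ` of the elementary diagrams of the
structures `(V_α, ∈, S_α)` can be coded by ordinals below `θ` so that, for club many `α`, the
restriction to parameters of rank below `α` is coded by ordinals below `α`. Subtlety yields `β < γ`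
in this club, closed under `κ ↦ γ_κ` and `κ ↦ 2 ^ κ`, at which the codes cohere, and coherence says
`(V_β, ∈, S_β) ≺ₑ (V_γ, ∈, S_γ)` with `γ > γ_β`. To make `β` regular, a cofinal sequence of length
`cof α`, together with the value `cof α`, is coded along with the diagram at `α`: at a singular `β`,
coherence would make the cofinal sequence chosen for `γ` equal to that of `β`, which is bounded
by `β`.
-/

section Development

open Set

universe u

/-! ### Closure points of ordinal functions -/

/-- The ordinals `0 < α < o` closed under `g`; a club in `o` when `o` is regular uncountable and `g`
maps `o` to itself. -/
def closurePoints (g : Ordinal.{u} → Ordinal.{u}) (o : Ordinal.{u}) : Set Ordinal.{u} :=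
  {α | 0 < α ∧ α < o ∧ ∀ β < α, g β < α}

lemma closurePoints_sup (f g : Ordinal.{u} → Ordinal.{u}) (o : Ordinal.{u}) :
    closurePoints (f ⊔ g) o = closurePoints f o ∩ closurePoints g o := by
  ext α
  simp only [closurePoints, mem_ofPred_eq, mem_inter_iff, Pi.sup_apply, sup_lt_iff]
  grind

lemma mapsTo_sup_Iio {f g : Ordinal.{u} → Ordinal.{u}} {o : Ordinal.{u}}
    (hf : MapsTo f (Iio o) (Iio o)) (hg : MapsTo g (Iio o) (Iio o)) :
    MapsTo (f ⊔ g) (Iio o) (Iio o) :=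
  fun _ hβ => mem_Iio.2 (max_lt (hf hβ) (hg hβ))

lemma exists_lt_ord_forall_lt {θ : Cardinal.{u}} (hθ : θ.IsRegular) {X : Type (u + 1)}
    {f : X → Ordinal.{u}} (hX : #X < Cardinal.lift.{u + 1} θ) (hf : ∀ x, f x < θ.ord) :
    ∃ b < θ.ord, ∀ x, f x < b := by
  have : Small.{u} X := by
    rw [Cardinal.small_iff_lift_mk_lt_univ]
    simpa using hX.trans (Cardinal.lift_lt_univ θ)
  refine ⟨⨆ x, f x + 1, Ordinal.lift_iSup_add_one_lt_of_lt_cof ?_ hf,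
    Ordinal.lt_iSup_add_one f⟩
  rw [← Ordinal.lift_cof, hθ.cof_ord]
  rwa [Cardinal.lift_id'.{u, u + 1}]

lemma mk_Iic_ordinal_lt {θ : Cardinal.{u}} (hθ : ℵ₀ ≤ θ) {β : Ordinal.{u}} (hβ : β < θ.ord) :
    #(Iic β) < Cardinal.lift.{u + 1} θ := by
  rw [← Order.Iio_succ, Order.succ_eq_add_one, Cardinal.mk_Iio_ordinal, Cardinal.lift_lt,
    ← Cardinal.lt_ord]
  exact (Cardinal.isSuccLimit_ord hθ).add_one_lt hβ

lemma exists_mem_closurePoints_ge {θ : Cardinal.{u}} (hθ : θ.IsRegular) (hω : ℵ₀ < θ)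
    {g : Ordinal.{u} → Ordinal.{u}} (hg : MapsTo g (Iio θ.ord) (Iio θ.ord))
    {α : Ordinal.{u}} (hα : α < θ.ord) : ∃ β ∈ closurePoints g θ.ord, α ≤ β := by
  have hbound : ∀ a < θ.ord, ∃ b < θ.ord, ∀ x : Iic a, g x < b := fun a ha =>
    exists_lt_ord_forall_lt hθ (mk_Iic_ordinal_lt hω.le ha) fun x => hg (x.2.trans_lt ha)
  choose! b hb hgb using hbound
  let f : Ordinal.{u} → Ordinal.{u} := fun a => max (a + 1) (b a)
  have hf : ∀ a < θ.ord, f a < θ.ord := fun a ha =>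
    max_lt ((Cardinal.isSuccLimit_ord hω.le).add_one_lt ha) (hb a ha)
  have hnfp : Ordinal.nfp f α < θ.ord := Ordinal.nfp_lt_ord (by rwa [hθ.cof_ord]) hf hα
  have hstep : ∀ n, f (f^[n] α) ≤ Ordinal.nfp f α := fun n => by
    simpa only [Function.iterate_succ_apply'] using Ordinal.iterate_le_nfp f α (n + 1)
  refine ⟨Ordinal.nfp f α, ⟨?_, hnfp, fun β hβ => ?_⟩, Ordinal.le_nfp f α⟩
  · exact (Order.lt_add_one_iff.2 zero_le).trans_le ((le_max_left _ _).trans (hstep 0))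
  · obtain ⟨n, hn⟩ := Ordinal.lt_nfp_iff.1 hβ
    have hgβ := hgb _ ((Ordinal.iterate_le_nfp f α n).trans_lt hnfp) ⟨β, hn.le⟩
    exact hgβ.trans_le ((le_max_right _ _).trans (hstep n))

lemma isClubIn_closurePoints {θ : Cardinal.{0}} (hθ : θ.IsRegular) (hω : ℵ₀ < θ)
    {g : Ordinal.{0} → Ordinal.{0}} (hg : MapsTo g (Iio θ.ord) (Iio θ.ord)) :
    IsClubIn (closurePoints g θ.ord) θ.ord := by
  refine ⟨fun α hα => hα.2.1, fun α hα => exists_mem_closurePoints_ge hθ hω hg hα,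
    fun α hα₀ hαθ hlim => ⟨hα₀, hαθ, fun β hβ => ?_⟩⟩
  obtain ⟨δ, hδ, hβδ, hδα⟩ := hlim β hβ
  exact (hδ.2.2 β hβδ).trans hδα

/-! ### Small rankings -/

/-- The ranking `r` of `X` by ordinals has fewer than `θ` elements up to each level below `θ`.
This is what allows the part of `X` of rank below `θ` to be coded by ordinals below `θ`. -/
def IsSmallRanking (θ : Cardinal.{u}) {X : Type (u + 1)} (r : X → Ordinal.{u}) : Prop :=
  ∀ β < θ.ord, #{x // r x ≤ β} < Cardinal.lift.{u + 1} θ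

lemma isSmallRanking_ordinal {θ : Cardinal.{u}} (hθ : ℵ₀ ≤ θ) :
    IsSmallRanking θ fun α : Ordinal.{u} => α :=
  fun _ hβ => mk_Iic_ordinal_lt hθ hβ

lemma isSmallRanking_rank {θ : Cardinal.{u}} (hθ : θ.IsInaccessible) :
    IsSmallRanking θ ZFSet.rank.{u} := by
  intro β hβ
  have hV : #{x : ZFSet.{u} // x.rank ≤ β} = #(ZFSet.vonNeumann (β + 1)) :=
    Cardinal.mk_congr <| Equiv.subtypeEquivRight fun x => by
      rw [ZFSet.mem_vonNeumann, Order.lt_add_one_iff]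
  rw [hV, ZFSet.cardinalMk_coe_sort, Cardinal.lift_lt, ZFSet.card_vonNeumann, ← hθ.preBeth_ord]
  exact Cardinal.preBeth_lt_preBeth.2 <|
    (Cardinal.isSuccLimit_ord hθ.aleph0_lt.le).add_one_lt hβ

namespace IsSmallRanking

variable {θ : Cardinal.{u}} {X Y : Type (u + 1)} {r : X → Ordinal.{u}} {s : Y → Ordinal.{u}}

lemma sum (hθ : ℵ₀ ≤ θ) (hr : IsSmallRanking θ r) (hs : IsSmallRanking θ s) :
    IsSmallRanking θ (Sum.elim r s) := by
  intro β hβ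
  rw [Cardinal.mk_congr Equiv.subtypeSum, Cardinal.mk_sum, Cardinal.lift_id, Cardinal.lift_id]
  exact Cardinal.add_lt_of_lt (by simpa using hθ) (hr β hβ) (hs β hβ)

lemma prod (hθ : ℵ₀ ≤ θ) (hr : IsSmallRanking θ r) (hs : IsSmallRanking θ s) :
    IsSmallRanking θ fun p : X × Y => max (r p.1) (s p.2) := by
  intro β hβ
  simp only [max_le_iff]
  rw [Cardinal.mk_congr (Equiv.subtypeProdEquivProd (p := (r · ≤ β)) (q := (s · ≤ β))),
    Cardinal.mk_prod, Cardinal.lift_id, Cardinal.lift_id]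
  exact Cardinal.mul_lt_of_lt (by simpa using hθ) (hr β hβ) (hs β hβ)

lemma pi {ι : Type} [Fintype ι] (hθ : ℵ₀ < θ) (hr : IsSmallRanking θ r) :
    IsSmallRanking θ fun v : ι → X => Finset.univ.sup fun i => r (v i) := by
  intro β hβ
  simp only [Finset.sup_le_iff, Finset.mem_univ, true_imp_iff]
  rw [Cardinal.mk_congr (Equiv.subtypePiEquivPi (p := fun _ => (r · ≤ β))), Cardinal.mk_pi,
    Cardinal.prod_const, Cardinal.mk_fintype ι, Cardinal.lift_natCast, Cardinal.lift_uzero]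
  exact Cardinal.power_nat_le_max.trans_lt (max_lt (hr β hβ) (by simpa using hθ))

lemma sigma {ι : Type} [Countable ι] {Z : ι → Type (u + 1)} {t : ∀ i, Z i → Ordinal.{u}}
    (hθ : θ.IsRegular) (hω : ℵ₀ < θ) (ht : ∀ i, IsSmallRanking θ (t i)) :
    IsSmallRanking θ fun z : Sigma Z => t z.1 z.2 := by
  intro β hβ
  let fiberwise : {z : Sigma Z // t z.1 z.2 ≤ β} → Σ i, {z : Z i // t i z ≤ β} :=
    fun z => ⟨z.1.1, z.1.2, z.2⟩
  have hinj : fiberwise.Injective := by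
    rintro ⟨⟨i, z⟩, hz⟩ ⟨⟨j, w⟩, hw⟩ h
    obtain ⟨rfl, h⟩ := Sigma.mk.inj_iff.1 h
    obtain rfl := congrArg Subtype.val (eq_of_heq h)
    rfl
  refine (Cardinal.mk_le_of_injective hinj).trans_lt ?_
  rw [Cardinal.mk_sigma]
  refine Cardinal.sum_lt_lift_of_isRegular hθ.lift ?_ fun i => ht i β hβ
  exact (Cardinal.lift_le_aleph0.2 Cardinal.mk_le_aleph0).trans_lt (by simpa using hω)

lemma mk_rank_lt_le (hθ : ℵ₀ ≤ θ) (hr : IsSmallRanking θ r) :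
    #{x // r x < θ.ord} ≤ Cardinal.lift.{u + 1} θ := by
  have hcover : {x | r x < θ.ord} = ⋃ β : Iio θ.ord, {x | r x ≤ β} := by
    ext x
    simp only [mem_ofPred_eq, mem_iUnion]
    exact ⟨fun h => ⟨⟨r x, h⟩, le_rfl⟩, fun ⟨β, hβ⟩ => hβ.trans_lt β.2⟩
  have hIio : #(Iio θ.ord) = Cardinal.lift.{u + 1} θ := by
    rw [Cardinal.mk_Iio_ordinal, Cardinal.card_ord]
  calc #{x | r x < θ.ord}
      ≤ #(Iio θ.ord) * ⨆ β : Iio θ.ord, #{x | r x ≤ β} := hcover ▸ Cardinal.mk_iUnion_le _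
    _ ≤ Cardinal.lift.{u + 1} θ * Cardinal.lift.{u + 1} θ :=
      mul_le_mul' hIio.le (ciSup_le' fun β => (hr β β.2).le)
    _ = Cardinal.lift.{u + 1} θ := Cardinal.mul_eq_self (by simpa using hθ)

lemma exists_injOn_ordinal (hθ : θ.IsRegular) (hr : IsSmallRanking θ r) :
    ∃ (e : X → Ordinal.{u}) (b : Ordinal.{u} → Ordinal.{u}), InjOn e {x | r x < θ.ord} ∧
      MapsTo b (Iio θ.ord) (Iio θ.ord) ∧ ∀ x, r x < θ.ord → e x < b (r x) := by
  have hle : #{x // r x < θ.ord} ≤ #(Iio θ.ord) := by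
    rw [Cardinal.mk_Iio_ordinal, Cardinal.card_ord]
    exact hr.mk_rank_lt_le hθ.aleph0_le
  obtain ⟨f⟩ := hle
  classical
  let e : X → Ordinal.{u} := fun x => if h : r x < θ.ord then f ⟨x, h⟩ else 0
  have he : ∀ x (h : r x < θ.ord), e x = f ⟨x, h⟩ := fun x h => dif_pos h
  have hbound : ∀ β < θ.ord, ∃ b < θ.ord, ∀ x : {x // r x ≤ β}, e x < b := fun β hβ =>
    exists_lt_ord_forall_lt hθ (hr β hβ) fun x => by
      rw [he x (x.2.trans_lt hβ)]
      exact (f _).2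
  choose! b hb heb using hbound
  refine ⟨e, b, fun x hx y hy hxy => ?_, hb, fun x hx => heb _ hx ⟨x, le_rfl⟩⟩
  rw [he x hx, he y hy] at hxy
  exact congrArg Subtype.val (f.injective (Subtype.ext hxy))

end IsSmallRanking

/-! ### Coherent pairs below a subtle cardinal -/

theorem IsSubtle.exists_coherent {θ : Cardinal.{0}} (hθ : IsSubtle θ) {X : Type 1}
    {r : X → Ordinal.{0}} (hr : IsSmallRanking θ r) {g : Ordinal.{0} → Ordinal.{0}}
    (hg : MapsTo g (Iio θ.ord) (Iio θ.ord)) (A : Ordinal.{0} → Set X) :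
    ∃ β ∈ closurePoints g θ.ord, ∃ γ ∈ closurePoints g θ.ord, β < γ ∧
      ∀ x, r x < β → (x ∈ A β ↔ x ∈ A γ) := by
  obtain ⟨hin, hsubtle⟩ := hθ
  obtain ⟨e, b, he, hb, heb⟩ := hr.exists_injOn_ordinal hin.isRegular
  let code : Ordinal.{0} → Set Ordinal.{0} := fun α => e '' {x ∈ A α | r x < α} ∩ Iio α
  have hclub := isClubIn_closurePoints hin.isRegular hin.aleph0_lt
    (mapsTo_sup_Iio hg hb)
  obtain ⟨β, hβ, γ, hγ, hβγ, hcode⟩ := hsubtle code (fun α => inter_subset_right) _ hclub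
  rw [closurePoints_sup] at hβ hγ
  have e_lt : ∀ x, r x < β → e x < β := fun x hx =>
    (heb x (hx.trans hβ.1.2.1)).trans (hβ.2.2.2 _ hx)
  have e_mem_code : ∀ α < θ.ord, β ≤ α → ∀ x, r x < β → (e x ∈ code α ↔ x ∈ A α) := by
    refine fun α hα hβα x hx => ⟨?_, fun hxA => ?_⟩
    · rintro ⟨⟨y, ⟨hyA, hy⟩, hyx⟩, -⟩
      exact he (hy.trans hα) (hx.trans hβ.1.2.1) hyx ▸ hyA
    · exact ⟨⟨x, ⟨hxA, hx.trans_le hβα⟩, rfl⟩, (e_lt x hx).trans_le hβα⟩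
  refine ⟨β, hβ.1, γ, hγ.1, hβγ, fun x hx => ?_⟩
  rw [← e_mem_code β hβ.1.2.1 le_rfl x hx, ← e_mem_code γ hγ.1.2.1 hβγ.le x hx, hcode]
  exact and_iff_left (e_lt x hx)

/-- A chosen cofinal sequence in `α` of length `cof α`. -/
noncomputable def fundamentalSeq (α : Ordinal.{u}) : Iio α.cof.ord → Iio α :=
  (Ordinal.exists_isFundamentalSeq rfl).choose

lemma isFundamentalSeq_fundamentalSeq (α : Ordinal.{u}) :
    Ordinal.IsFundamentalSeq (fundamentalSeq α) :=
  (Ordinal.exists_isFundamentalSeq rfl).choose_spec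

/-- The graph of `fundamentalSeq α`, each of whose points also records `cof α`. The tag keeps the
whole graph at or above level `α` when `α` is regular, so that it only constrains singular `α`. -/
def cofinalityCode (α : Ordinal.{u}) : Set (Ordinal.{u} × Ordinal.{u} × Ordinal.{u}) :=
  range fun i : Iio α.cof.ord => (i.1, (fundamentalSeq α i).1, α.cof.ord)

lemma not_cofinalityCode_subset {β γ : Ordinal.{u}} (hβ : 0 < β) (hβγ : β < γ) :
    ¬ cofinalityCode β ⊆ cofinalityCode γ := by
  intro hsub
  have hmem : ∀ i : Iio β.cof.ord, ∃ j : Iio γ.cof.ord,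
      j.1 = i.1 ∧ (fundamentalSeq γ j).1 = (fundamentalSeq β i).1 ∧ γ.cof.ord = β.cof.ord :=
    fun i => by simpa only [cofinalityCode, mem_range, Prod.mk.injEq] using hsub ⟨i, rfl⟩
  have hpos : 0 < β.cof.ord := by simpa only [Cardinal.lt_ord, Ordinal.card_zero, Ordinal.cof_pos]
  obtain ⟨-, -, -, hcof⟩ := hmem ⟨0, hpos⟩
  obtain ⟨_, ⟨j, rfl⟩, hj⟩ := (isFundamentalSeq_fundamentalSeq γ).isCofinal_range ⟨β, hβγ⟩
  obtain ⟨j', hj', hseq, -⟩ := hmem ⟨j, j.2.trans_eq hcof⟩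
  obtain rfl : j' = j := Subtype.ext hj'
  have hβj : β ≤ (fundamentalSeq γ j').1 := hj
  exact (hseq ▸ hβj).not_gt (fundamentalSeq β _).2

theorem IsSubtle.exists_coherent_ord {θ : Cardinal.{0}} (hθ : IsSubtle θ) {X : Type 1}
    {r : X → Ordinal.{0}} (hr : IsSmallRanking θ r) {g : Ordinal.{0} → Ordinal.{0}}
    (hg : MapsTo g (Iio θ.ord) (Iio θ.ord)) (A : Ordinal.{0} → Set X) :
    ∃ κ : Cardinal.{0}, κ ≤ κ.ord.cof ∧ κ.ord ∈ closurePoints g θ.ord ∧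
      ∃ γ ∈ closurePoints g θ.ord, κ.ord < γ ∧
        ∀ x, r x < κ.ord → (x ∈ A κ.ord ↔ x ∈ A γ) := by
  have hω : ℵ₀ ≤ θ := hθ.1.aleph0_lt.le
  have hid := isSmallRanking_ordinal hω
  obtain ⟨β, hβ, γ, hγ, hβγ, hcoh⟩ := hθ.exists_coherent (hr.sum hω (hid.prod hω (hid.prod hω hid)))
    hg fun α => {x | x.elim (· ∈ A α) (· ∈ cofinalityCode α)}
  have hreg : β.cof.ord = β := by
    refine (Ordinal.ord_cof_le β).antisymm (not_lt.1 fun hsing => ?_)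
    refine not_cofinalityCode_subset hβ.1 hβγ ?_
    rintro _ ⟨i, rfl⟩
    have hrank := max_lt (i.2.trans hsing) (max_lt (fundamentalSeq β i).2 hsing)
    exact (hcoh (.inr (i, fundamentalSeq β i, β.cof.ord)) hrank).1 ⟨i, rfl⟩
  refine ⟨β.cof, by rw [hreg], ?_⟩
  rw [hreg]
  exact ⟨hβ, γ, hγ, hβγ, fun x hx => hcoh (.inl x) hx⟩

/-! ### Elementary diagrams -/

instance : Countable LSP.Symbols := by
  have hrel : ∀ n, Countable (LSP.Relations n)
    | 0 | _ + 3 => inferInstanceAs (Countable Empty)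
    | 1 | 2 => inferInstanceAs (Countable Unit)
  have hfun : ∀ n, Countable (LSP.Functions n) := fun _ => inferInstanceAs (Countable Empty)
  exact inferInstanceAs (Countable (_ ⊕ _))

/-- An `LSP`-formula together with sets assigned to its free variables. -/
abbrev ParamFormula : Type 1 :=
  Σ φ : (Σ n, LSP.Formula (Fin n)), Fin φ.1 → ZFSet.{0}

/-- The supremum of the ranks of the parameters. -/
noncomputable def ParamFormula.rank (x : ParamFormula) : Ordinal.{0} :=
  Finset.univ.sup fun i => (x.2 i).rank

lemma isSmallRanking_paramFormula_rank {θ : Cardinal.{0}} (hθ : θ.IsInaccessible) :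
    IsSmallRanking θ ParamFormula.rank :=
  .sigma hθ.isRegular hθ.aleph0_lt fun _ => (isSmallRanking_rank hθ).pi hθ.aleph0_lt

/-- The elementary diagram of `(A, ∈, S)`. -/
def elementaryDiagram (A S : Set ZFSet.{0}) : Set ParamFormula :=
  {x | ∃ h : ∀ i, x.2 i ∈ A, (ZModel A S).Realize x.1.2 fun i => ⟨x.2 i, h i⟩}

lemma zeee_of_elementaryDiagram {A B S T : Set ZFSet.{0}} (hAB : A ⊂ B)
    (htrans : ∀ x ∈ A, ∀ y ∈ x, y ∈ A)
    (hdiag : ∀ x : ParamFormula, (∀ i, x.2 i ∈ A) →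
      (x ∈ elementaryDiagram A S ↔ x ∈ elementaryDiagram B T)) :
    ZEEE A S B T := by
  refine ⟨hAB.subset, fun n φ v => ?_, fun a b hba => ⟨⟨b.1, htrans a.1 a.2 b.1 hba⟩, rfl⟩,
    fun hsurj => hAB.not_subset fun y hy => ?_⟩
  · have hv := hdiag ⟨⟨n, φ⟩, fun i => (v i).1⟩ fun i => (v i).2
    exact ⟨fun h => (hv.2 ⟨fun i => hAB.subset (v i).2, h⟩).2,
      fun h => (hv.1 ⟨fun i => (v i).2, h⟩).2⟩
  · obtain ⟨x, hx⟩ := hsurj ⟨y, hy⟩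
    have hxy : x.1 = y := congrArg Subtype.val hx
    exact hxy ▸ x.2

lemma toSet_vonNeumann (o : Ordinal.{0}) : (ZFSet.vonNeumann o).toSet = Vrank o :=
  Set.ext fun _ => ZFSet.mem_vonNeumann

lemma Vrank_ssubset_Vrank {β γ : Ordinal.{0}} (hβγ : β < γ) : Vrank β ⊂ Vrank γ := by
  refine ssubset_iff_exists.2 ⟨fun x hx => lt_trans hx hβγ, ZFSet.vonNeumann β, ?_, ?_⟩
  · exact (ZFSet.rank_vonNeumann β).trans_lt hβγ
  · exact (ZFSet.rank_vonNeumann β).not_lt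

lemma zeee_Vrank {β γ : Ordinal.{0}} (hβ : 0 < β) (hβγ : β < γ) {S T : Set ZFSet.{0}}
    (hdiag : ∀ x : ParamFormula, x.rank < β →
      (x ∈ elementaryDiagram (Vrank β) S ↔ x ∈ elementaryDiagram (Vrank γ) T)) :
    ZEEE (Vrank β) S (Vrank γ) T :=
  zeee_of_elementaryDiagram (Vrank_ssubset_Vrank hβγ)
    (fun _ hx _ hy => (ZFSet.rank_lt_of_mem hy).trans hx)
    fun x hx => hdiag x ((Finset.sup_lt_iff hβ).2 fun i _ => hx i)

/-! ### Reflection at an inaccessible -/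

/-- The function whose closure points are the initial ordinals of the uncountable strong limit
cardinals. -/
noncomputable def strongLimitBound (β : Ordinal.{u}) : Ordinal.{u} :=
  max Ordinal.omega0 (2 ^ β.card : Cardinal.{u}).ord

lemma mapsTo_strongLimitBound {θ : Cardinal.{u}} (hθ : θ.IsInaccessible) :
    MapsTo strongLimitBound (Iio θ.ord) (Iio θ.ord) := by
  refine fun β hβ => mem_Iio.2 (max_lt ?_ ?_)
  · rw [← Cardinal.ord_aleph0]
    exact Cardinal.ord_lt_ord.2 hθ.aleph0_lt
  · exact Cardinal.ord_lt_ord.2 (hθ.isStrongPrelimit (Cardinal.lt_ord.1 hβ))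

lemma isInaccessible_of_ord_mem_closurePoints {κ : Cardinal.{u}} {o : Ordinal.{u}}
    (hcof : κ ≤ κ.ord.cof) (hκ : κ.ord ∈ closurePoints strongLimitBound o) :
    κ.IsInaccessible where
  aleph0_lt := by
    rw [← Cardinal.ord_lt_ord, Cardinal.ord_aleph0]
    exact (le_max_left _ _).trans_lt (hκ.2.2 0 hκ.1)
  le_cof_ord := hcof
  isStrongPrelimit c hc := by
    have hpow : (2 ^ c.ord.card : Cardinal.{u}).ord < κ.ord :=
      (le_max_right _ _).trans_lt (hκ.2.2 _ (Cardinal.ord_lt_ord.2 hc))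
    rwa [Cardinal.card_ord, Cardinal.ord_lt_ord] at hpow

theorem IsSubtle.exists_isInaccessible_zeee {θ : Cardinal.{0}} (hθ : IsSubtle θ)
    {g : Ordinal.{0} → Ordinal.{0}} (hg : MapsTo g (Iio θ.ord) (Iio θ.ord))
    (S : Ordinal.{0} → Set ZFSet.{0}) :
    ∃ κ : Cardinal.{0}, κ.IsInaccessible ∧ ∃ γ ∈ closurePoints g θ.ord, κ.ord < γ ∧
      ZEEE (Vrank κ.ord) (S κ.ord) (Vrank γ) (S γ) := by
  obtain ⟨κ, hcof, hκ, γ, hγ, hκγ, hdiag⟩ := hθ.exists_coherent_ord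
    (isSmallRanking_paramFormula_rank hθ.1)
    (mapsTo_sup_Iio hg (mapsTo_strongLimitBound hθ.1)) fun α => elementaryDiagram (Vrank α) (S α)
  rw [closurePoints_sup] at hκ hγ
  exact ⟨κ, isInaccessible_of_ord_mem_closurePoints hcof hκ.2, γ, hγ.1, hκγ,
    zeee_Vrank hκ.1.1 hκγ hdiag⟩

end Development

/-- If `θ` is subtle then there is `κ < θ` which `R(θ)`
believes to be unfoldable: `κ` is inaccessible and for every `S ⊆ R(κ)` and
every `γ < θ` there is a transitive end elementary extension of `(R(κ),∈,S)`
of rank `< θ` and height at least `γ`. -/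
theorem subtle_implies_unfoldable_in_Rtheta
    (θ : Cardinal.{0}) (hθ : IsSubtle θ) :
    ∃ κ : Cardinal.{0}, κ < θ ∧ κ.IsInaccessible ∧
      ∀ S : Set ZFSet, S ⊆ Vrank κ.ord → ∀ γ : Ordinal.{0}, γ < θ.ord →
        ∃ (N : ZFSet) (T : Set ZFSet), N.IsTransitive ∧ N.rank < θ.ord ∧
          ZEEE (Vrank κ.ord) S N.toSet T ∧ γ ≤ N.rank := by
  by_contra! h
  choose! S _ Γ hΓ hbad using h
  classical
  let g : Ordinal.{0} → Ordinal.{0} := fun β => if Γ β.card < θ.ord then Γ β.card else 0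
  have hg : Set.MapsTo g (Set.Iio θ.ord) (Set.Iio θ.ord) := fun β _ => by
    simp only [g, Set.mem_Iio]
    split_ifs with hlt
    exacts [hlt, hθ.1.isRegular.ord_pos]
  obtain ⟨κ, hκ, γ, ⟨-, hγθ, hγg⟩, hκγ, hext⟩ :=
    hθ.exists_isInaccessible_zeee hg fun α => S α.card
  have hκθ : κ < θ := Cardinal.ord_lt_ord.1 (hκγ.trans hγθ)
  have hΓγ : Γ κ < γ := by
    simpa only [g, Cardinal.card_ord, if_pos (hΓ κ hκθ hκ)] using hγg _ hκγ
  rw [Cardinal.card_ord] at hext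
  refine (hbad κ hκθ hκ (ZFSet.vonNeumann γ) (S γ.card) (ZFSet.isTransitive_vonNeumann γ)
    ?_ ?_).not_ge ?_
  · rwa [ZFSet.rank_vonNeumann]
  · rwa [toSet_vonNeumann]
  · rw [ZFSet.rank_vonNeumann]
    exact hΓγ.le
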